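/- The restriction map Res, defined on the algebra of supersymmetric polynomials in the 2p+2q variables x_{±i}, y_{±j} by the substitution x_{±i} ↦ ±(1/2)x_i, y_{±j} ↦ ±(1/2)y_j, surjects onto the algebra of even supersymmetric polynomials in the p+q variables x_i, y_j. -/

import Mathlib

/-!
An even polynomial is `g = h(x², y²)`. Writing `u = x²` and `v = y²`, supersymmetry of `g` says that
`h` is symmetric in `u` and in `v` and does not change when two equal values `uᵢ = vⱼ` are both
replaced by `t`. The proof shows that all such `h` are polynomials in the complete supersymmetric
functions `h_m`, the coefficients of `H(z) = ∏ⱼ (1 - vⱼ z) / ∏ᵢ (1 - uᵢ z)` (`mem_superAlg`).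
Each `h_m(x², y²)` is a restriction: substituting in
`∏_b (1 + 2 y_b z) / ∏_a (1 - 2 x_a z)`, whose coefficients are supersymmetric, gives
`∏ⱼ (1 - yⱼ² z²) / ∏ᵢ (1 - xᵢ² z²)` (`superSeries_doubled`, `exists_resMap_eq`).

Generation is proved by induction on the number of variables. Setting `u₀ = v₀ = 0` maps `h` to a
polynomial of the same kind in fewer variables and maps the functions `h_m` to each other, so after
subtracting a polynomial in the `h_m` one may assume that `h` is killed. Then `h` vanishes whenever
`uᵢ = vⱼ`, hence it is the product of the resultant `R = ∏ᵢ ∏ⱼ (uᵢ - vⱼ)` and a doubly symmetric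
polynomial, and it remains to see that every such product lies in the algebra `A` generated by the
`h_m` (`mul_resultant_mem`). Since `∏ⱼ (1 - vⱼ z) = H(z) ∏ᵢ (1 - uᵢ z)`, symmetric polynomials in `v`
are combinations of symmetric polynomials in `u` with coefficients in `A`, so products `R F(u)` with
`F` symmetric suffice. For these, consider the linear functional
`L(tⁿ) = ∑ᵢ uᵢⁿ ∏ⱼ (uᵢ - vⱼ) / ∏_{k ≠ i} (uᵢ - uₖ)`. By partial fractions its values are coefficients
of `H` or zero, so they lie in `A`. Applying `L` in each variable of
`F(t₁, …, t_p) ∏_{k ≠ l} (tₖ - tₗ)` gives a sum over maps `{1, …, p} → {1, …, p}` in which only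
permutations contribute, each of them `R F(u)`; so `p! R F(u)` lies in `A`
(`aeval_mul_resultant_mem`).
-/

open MvPolynomial

open scoped Classical in
/-- The substitution sending the distinguished variable `a₀` of the first group to `t`,
the distinguished variable `b₀` of the second group to `-t`, fixing all others. -/
noncomputable def substAt {α β : Type} (a0 : α) (b0 : β) (t : ℂ) :
    (α ⊕ β) → MvPolynomial (α ⊕ β) ℂ := fun v =>
  if v = Sum.inl a0 then C t else if v = Sum.inr b0 then - C t else X v

/-- Supersymmetric polynomial in two groups of variables, with distinguished first
variables `a₀` and `b₀`: symmetric in each group separately, and the substitution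
`a₀ = t, b₀ = −t` yields a polynomial independent of `t`. -/
def IsSuperSymOn {α β : Type} (a0 : α) (b0 : β) (f : MvPolynomial (α ⊕ β) ℂ) : Prop :=
  (∀ σ : Equiv.Perm α, rename (Sum.map (⇑σ) id) f = f) ∧
  (∀ τ : Equiv.Perm β, rename (Sum.map id (⇑τ)) f = f) ∧
  (∀ t t' : ℂ, aeval (substAt a0 b0 t) f = aeval (substAt a0 b0 t') f)

/-- Even supersymmetric: supersymmetric and invariant under all sign changes. -/
def IsEvenSuperSymOn {α β : Type} (a0 : α) (b0 : β) (f : MvPolynomial (α ⊕ β) ℂ) : Prop :=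
  IsSuperSymOn a0 b0 f ∧
  ∀ ε : (α ⊕ β) → ℂ, (∀ v, ε v = 1 ∨ ε v = -1) →
    aeval (fun v => C (ε v) * X v) f = f

/-- The restriction homomorphism `Res`, `x_{±i} ↦ ±(1/2)xᵢ`, `y_{±j} ↦ ±(1/2)yⱼ`. -/
noncomputable def ResMap (p q : ℕ) :
    MvPolynomial ((Fin p ⊕ Fin p) ⊕ (Fin q ⊕ Fin q)) ℂ →ₐ[ℂ]
      MvPolynomial (Fin p ⊕ Fin q) ℂ :=
  aeval fun v =>
    match v with
    | Sum.inl (Sum.inl i) => C (1/2 : ℂ) * X (Sum.inl i)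
    | Sum.inl (Sum.inr i) => - (C (1/2 : ℂ) * X (Sum.inl i))
    | Sum.inr (Sum.inl j) => C (1/2 : ℂ) * X (Sum.inr j)
    | Sum.inr (Sum.inr j) => - (C (1/2 : ℂ) * X (Sum.inr j))


/-! ### The generating series of complete supersymmetric functions and residues -/

/-- The generating series `∏ⱼ (1 - vⱼ z) / ∏ᵢ (1 - uᵢ z)`, whose coefficients are the complete
supersymmetric functions of `(u | v)`. The inverse of `1 - uᵢ z` is written as the geometric
series, so that the definition makes sense over every commutative ring and commutes with
ring homomorphisms on the nose. -/
noncomputable def superSeries {R ι κ : Type*} [CommRing R] [Fintype ι] [Fintype κ]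
    (u : ι → R) (v : κ → R) : PowerSeries R :=
  (∏ j, (1 - PowerSeries.C (v j) * PowerSeries.X)) * ∏ i, PowerSeries.mk fun n => u i ^ n

lemma one_sub_mul_geom {R : Type*} [CommRing R] (a : R) :
    (1 - PowerSeries.C a * PowerSeries.X) * PowerSeries.mk (fun n => a ^ n) = 1 := by
  ext n
  rw [sub_mul, one_mul, map_sub, mul_assoc, PowerSeries.coeff_C_mul]
  cases n with
  | zero => simp
  | succ n => simp [PowerSeries.coeff_succ_X_mul, pow_succ, mul_comm, PowerSeries.coeff_one]

lemma map_geom {R S : Type*} [CommRing R] [CommRing S] (φ : R →+* S) (a : R) :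
    PowerSeries.map φ (PowerSeries.mk fun n => a ^ n) = PowerSeries.mk fun n => φ a ^ n := by
  ext n; simp

lemma map_superSeries {R S ι κ : Type*} [CommRing R] [CommRing S] [Fintype ι] [Fintype κ]
    (φ : R →+* S) (u : ι → R) (v : κ → R) :
    PowerSeries.map φ (superSeries u v) = superSeries (φ ∘ u) (φ ∘ v) := by
  simp [superSeries, map_prod, map_geom]

lemma map_coeff_superSeries {R S ι κ : Type*} [CommRing R] [CommRing S] [Fintype ι] [Fintype κ]
    (φ : R →+* S) (u : ι → R) (v : κ → R) (m : ℕ) :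
    φ (PowerSeries.coeff m (superSeries u v)) =
      PowerSeries.coeff m (superSeries (φ ∘ u) (φ ∘ v)) := by
  rw [← map_superSeries, PowerSeries.coeff_map]

lemma algHom_coeff_superSeries {R S ι κ : Type*} [CommRing R] [CommRing S] [Algebra ℂ R]
    [Algebra ℂ S] [Fintype ι] [Fintype κ] (φ : R →ₐ[ℂ] S) (u : ι → R) (v : κ → R) (m : ℕ) :
    φ (PowerSeries.coeff m (superSeries u v)) =
      PowerSeries.coeff m (superSeries (fun i => φ (u i)) fun j => φ (v j)) :=
  map_coeff_superSeries φ.toRingHom u v m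

lemma superSeries_perm {R ι κ : Type*} [CommRing R] [Fintype ι] [Fintype κ]
    (u : ι → R) (v : κ → R) (σ : Equiv.Perm ι) (τ : Equiv.Perm κ) :
    superSeries (u ∘ σ) (v ∘ τ) = superSeries u v := by
  unfold superSeries
  congr 1
  · exact Equiv.prod_comp τ fun j => (1 - PowerSeries.C (v j) * PowerSeries.X)
  · exact Equiv.prod_comp σ fun i => PowerSeries.mk fun n => u i ^ n

/-- Cancellation: a pair of equal parameters `u a = v b` does not contribute. -/
lemma superSeries_cancel {R ι κ : Type*} [CommRing R] [Fintype ι] [Fintype κ]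
    [DecidableEq ι] [DecidableEq κ] (u : ι → R) (v : κ → R) (a : ι) (b : κ) (h : u a = v b) :
    superSeries u v = (∏ j ∈ Finset.univ.erase b, (1 - PowerSeries.C (v j) * PowerSeries.X)) *
      ∏ i ∈ Finset.univ.erase a, PowerSeries.mk fun n => u i ^ n := by
  unfold superSeries
  rw [← Finset.mul_prod_erase _ _ (Finset.mem_univ a),
    ← Finset.mul_prod_erase _ _ (Finset.mem_univ b), ← h]
  linear_combination (∏ j ∈ Finset.univ.erase b, (1 - PowerSeries.C (v j) * PowerSeries.X)) *
      (∏ i ∈ Finset.univ.erase a, PowerSeries.mk fun n => u i ^ n) * one_sub_mul_geom (u a)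

lemma superSeries_congr {R ι κ : Type*} [CommRing R] [Fintype ι] [Fintype κ]
    (u u' : ι → R) (v v' : κ → R) (a : ι) (b : κ) (h : u a = v b) (h' : u' a = v' b)
    (hu : ∀ i, i ≠ a → u i = u' i) (hv : ∀ j, j ≠ b → v j = v' j) :
    superSeries u v = superSeries u' v' := by
  classical
  rw [superSeries_cancel u v a b h, superSeries_cancel u' v' a b h']
  congr 1
  · exact Finset.prod_congr rfl fun j hj => by rw [hv j (Finset.ne_of_mem_erase hj)]
  · exact Finset.prod_congr rfl fun i hi => by rw [hu i (Finset.ne_of_mem_erase hi)]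

/-- Divided differences of powers are complete homogeneous symmetric functions. The case `n = 0`
follows from the recursion `e (n + 1) = u a * e n` for the discrepancy `e` between the two sides,
which holds for every `a ∈ s`: two distinct values of `u a` force `e 0 = 0`. -/
lemma sum_pow_div_eq_coeff {K ι : Type*} [Field K] [DecidableEq ι] (u : ι → K)
    (hu : Function.Injective u) (s : Finset ι) :
    ∀ n : ℕ, ∑ i ∈ s, u i ^ n / ∏ k ∈ s.erase i, (u i - u k) =
      PowerSeries.coeff (n + 1) (PowerSeries.X ^ s.card *
        ∏ i ∈ s, PowerSeries.mk fun n => u i ^ n) := by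
  induction hs : s.card generalizing s with
  | zero =>
    intro n
    rw [Finset.card_eq_zero] at hs
    subst hs
    simp [PowerSeries.coeff_one]
  | succ c ih =>
    -- Removing the point `a` multiplies the numerators by `u i - u a`.
    have rec_a : ∀ a ∈ s, ∀ n : ℕ,
        (∑ i ∈ s, u i ^ (n + 1) / ∏ k ∈ s.erase i, (u i - u k)) -
          PowerSeries.coeff (n + 1 + 1) (PowerSeries.X ^ (c + 1) *
            ∏ i ∈ s, PowerSeries.mk fun n => u i ^ n) =
        u a * ((∑ i ∈ s, u i ^ n / ∏ k ∈ s.erase i, (u i - u k)) -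
          PowerSeries.coeff (n + 1) (PowerSeries.X ^ (c + 1) *
            ∏ i ∈ s, PowerSeries.mk fun n => u i ^ n)) := by
      intro a ha n
      have h1 : (∑ i ∈ s, u i ^ (n + 1) / ∏ k ∈ s.erase i, (u i - u k)) -
          u a * (∑ i ∈ s, u i ^ n / ∏ k ∈ s.erase i, (u i - u k)) =
          ∑ i ∈ s.erase a, u i ^ n / ∏ k ∈ (s.erase a).erase i, (u i - u k) := by
        rw [Finset.mul_sum, ← Finset.sum_sub_distrib, ← Finset.add_sum_erase _ _ ha]
        have h0 : u a ^ (n + 1) / ∏ k ∈ s.erase a, (u a - u k) -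
            u a * (u a ^ n / ∏ k ∈ s.erase a, (u a - u k)) = 0 := by ring
        rw [h0, zero_add]
        refine Finset.sum_congr rfl fun i hi => ?_
        have hia : i ≠ a := Finset.ne_of_mem_erase hi
        have hmem : a ∈ s.erase i := Finset.mem_erase.2 ⟨hia.symm, ha⟩
        rw [← Finset.mul_prod_erase _ _ hmem, Finset.erase_right_comm]
        have hne : u i - u a ≠ 0 := sub_ne_zero.2 (hu.ne hia)
        have hne' : ∏ k ∈ (s.erase a).erase i, (u i - u k) ≠ 0 := by
          refine Finset.prod_ne_zero_iff.2 fun k hk => sub_ne_zero.2 (hu.ne ?_)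
          exact (Finset.ne_of_mem_erase hk).symm
        field_simp
        ring
      have h2 : PowerSeries.coeff (n + 1 + 1) (PowerSeries.X ^ (c + 1) *
            ∏ i ∈ s, PowerSeries.mk fun n => u i ^ n) -
          u a * PowerSeries.coeff (n + 1) (PowerSeries.X ^ (c + 1) *
            ∏ i ∈ s, PowerSeries.mk fun n => u i ^ n) =
          PowerSeries.coeff (n + 1) (PowerSeries.X ^ c *
            ∏ i ∈ s.erase a, PowerSeries.mk fun n => u i ^ n) := by
        rw [← PowerSeries.coeff_C_mul, ← PowerSeries.coeff_succ_X_mul (n + 1),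
          ← PowerSeries.coeff_succ_X_mul (n + 1), ← map_sub,
          ← Finset.mul_prod_erase _ (fun i => PowerSeries.mk fun n => u i ^ n) ha]
        congr 1
        linear_combination (PowerSeries.X ^ (c + 1) *
          ∏ i ∈ s.erase a, PowerSeries.mk fun n => u i ^ n) * one_sub_mul_geom (u a)
      have h3 := ih (s.erase a) (by rw [Finset.card_erase_of_mem ha, hs]; rfl) n
      linear_combination h1 - h2 + h3
    intro n
    induction n with
    | zero =>
      by_cases hc : c = 0
      · subst hc
        obtain ⟨a, rfl⟩ := Finset.card_eq_one.1 hs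
        simp [PowerSeries.coeff_succ_X_mul]
      · obtain ⟨a, ha, b, hb, hab⟩ := Finset.one_lt_card.1 (by omega : 1 < s.card)
        have e1 := rec_a a ha 0
        have e2 := rec_a b hb 0
        rw [e1, ← sub_eq_zero, ← sub_mul] at e2
        exact sub_eq_zero.1
          ((mul_eq_zero.1 e2).resolve_left (sub_ne_zero.2 (hu.ne hab)))
    | succ n ihn =>
      obtain ⟨a, ha⟩ := Finset.card_pos.1 (by omega : 0 < s.card)
      have := rec_a a ha n
      rw [ihn, sub_self, mul_zero] at this
      exact sub_eq_zero.1 this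

/-- The partial fraction expansion of `superSeries`. -/
lemma sum_pow_mul_prod_div_eq_coeff {K ι κ : Type*} [Field K] [Fintype ι] [DecidableEq ι]
    (u : ι → K) (hu : Function.Injective u) (v : κ → K) (t : Finset κ) :
    ∀ n : ℕ, ∑ i, u i ^ n * ((∏ j ∈ t, (u i - v j)) / ∏ k ∈ Finset.univ.erase i, (u i - u k)) =
      PowerSeries.coeff (n + t.card + 1) (PowerSeries.X ^ Fintype.card ι *
        ((∏ j ∈ t, (1 - PowerSeries.C (v j) * PowerSeries.X)) *
          ∏ i, PowerSeries.mk fun n => u i ^ n)) := by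
  classical
  induction t using Finset.induction_on with
  | empty =>
    intro n
    have := sum_pow_div_eq_coeff u hu Finset.univ n
    simpa [div_eq_mul_inv] using this
  | insert b t hb ih =>
    intro n
    have h1 : PowerSeries.coeff (n + (insert b t).card + 1) (PowerSeries.X ^ Fintype.card ι *
        ((∏ j ∈ insert b t, (1 - PowerSeries.C (v j) * PowerSeries.X)) *
          ∏ i, PowerSeries.mk fun n => u i ^ n)) =
        PowerSeries.coeff (n + 1 + t.card + 1) (PowerSeries.X ^ Fintype.card ι *
        ((∏ j ∈ t, (1 - PowerSeries.C (v j) * PowerSeries.X)) *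
          ∏ i, PowerSeries.mk fun n => u i ^ n)) - v b *
        PowerSeries.coeff (n + t.card + 1) (PowerSeries.X ^ Fintype.card ι *
        ((∏ j ∈ t, (1 - PowerSeries.C (v j) * PowerSeries.X)) *
          ∏ i, PowerSeries.mk fun n => u i ^ n)) := by
      rw [Finset.card_insert_of_notMem hb, Finset.prod_insert hb,
        ← PowerSeries.coeff_C_mul, ← PowerSeries.coeff_succ_X_mul (n + t.card + 1),
        show n + 1 + t.card + 1 = n + t.card + 1 + 1 by ring,
        show n + (t.card + 1) + 1 = n + t.card + 1 + 1 by ring, ← map_sub]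
      congr 1
      ring
    rw [h1, ← ih, ← ih, Finset.mul_sum, ← Finset.sum_sub_distrib]
    refine Finset.sum_congr rfl fun i _ => ?_
    rw [Finset.prod_insert hb]
    ring

/-- The values of the residue functional `L(tⁿ) = ∑ᵢ uᵢⁿ ∏ⱼ (uᵢ - vⱼ) / ∏_{k ≠ i} (uᵢ - uₖ)`
are coefficients of `superSeries`, or zero. -/
lemma residue_mem {K ι κ : Type*} [Field K] [Algebra ℂ K] [Fintype ι] [DecidableEq ι] [Fintype κ]
    (u : ι → K) (hu : Function.Injective u) (v : κ → K) (A : Subalgebra ℂ K)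
    (hA : ∀ m, PowerSeries.coeff m (superSeries u v) ∈ A) (n : ℕ) :
    ∑ i, u i ^ n * ((∏ j, (u i - v j)) / ∏ k ∈ Finset.univ.erase i, (u i - u k)) ∈ A := by
  rw [sum_pow_mul_prod_div_eq_coeff u hu v Finset.univ n, PowerSeries.coeff_X_pow_mul']
  split_ifs
  · exact hA _
  · exact A.zero_mem

/-- Applying the residue functional in each of the variables of a polynomial `Q`. -/
lemma tensor_residue_mem {K ι : Type*} [Field K] [Algebra ℂ K] [Fintype ι] [DecidableEq ι]
    (u w : ι → K) (A : Subalgebra ℂ K) (hA : ∀ n : ℕ, ∑ i, u i ^ n * w i ∈ A)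
    (Q : MvPolynomial ι ℂ) :
    ∑ f : ι → ι, (∏ k, w (f k)) * aeval (u ∘ f) Q ∈ A := by
  induction Q using MvPolynomial.induction_on' with
  | monomial a c =>
    have : ∑ f : ι → ι, (∏ k, w (f k)) * aeval (u ∘ f) (monomial a c) =
        algebraMap ℂ K c * ∏ k, ∑ i, u i ^ a k * w i := by
      rw [Finset.prod_univ_sum, Finset.mul_sum, Fintype.piFinset_univ]
      refine Finset.sum_congr rfl fun f _ => ?_
      rw [aeval_monomial, Finsupp.prod_fintype _ _ (by simp), Finset.prod_mul_distrib]
      simp only [Function.comp]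
      ring
    rw [this]
    exact A.mul_mem (A.algebraMap_mem c) (A.prod_mem fun k _ => hA _)
  | add P Q hP hQ =>
    simp only [map_add, mul_add, Finset.sum_add_distrib]
    exact A.add_mem hP hQ

/-- For symmetric `F`, the product of `F(u)` with the resultant `∏ᵢ ∏ⱼ (uᵢ - vⱼ)` is a polynomial
in the complete supersymmetric functions: up to a nonzero integer it is the value of the tensor
power of the residue functional at `F ∏_{k ≠ l} (tₖ - tₗ)`. -/
lemma aeval_mul_resultant_mem {K ι κ : Type*} [Field K] [Algebra ℂ K] [Fintype ι] [DecidableEq ι]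
    [Fintype κ] (u : ι → K) (hu : Function.Injective u) (v : κ → K) (A : Subalgebra ℂ K)
    (hA : ∀ m, PowerSeries.coeff m (superSeries u v) ∈ A)
    (F : MvPolynomial ι ℂ) (hF : F.IsSymmetric) :
    aeval u F * ∏ i, ∏ j, (u i - v j) ∈ A := by
  set w : ι → K := fun i => (∏ j, (u i - v j)) / ∏ k ∈ Finset.univ.erase i, (u i - u k) with hw
  set Q : MvPolynomial ι ℂ := F * ∏ k, ∏ l ∈ Finset.univ.erase k, (X k - X l) with hQ
  have hmem := tensor_residue_mem u w A (residue_mem u hu v A hA) Q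
  have hval : ∀ f : ι → ι, Function.Injective f →
      (∏ k, w (f k)) * aeval (u ∘ f) Q = aeval u F * ∏ i, ∏ j, (u i - v j) := by
    intro f hf
    have hb : Function.Bijective f := Finite.injective_iff_bijective.1 hf
    set σ : Equiv.Perm ι := Equiv.ofBijective f hb
    have hσ : ∀ k, f k = σ k := fun k => rfl
    have h1 : aeval (u ∘ f) F = aeval u F := by
      conv_rhs => rw [← hF σ]
      rw [aeval_rename]
      rfl
    have h2 : aeval (u ∘ f) (∏ k, ∏ l ∈ Finset.univ.erase k, (X k - X l) : MvPolynomial ι ℂ) =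
        ∏ k, ∏ l ∈ Finset.univ.erase k, (u k - u l) := by
      simp only [map_prod, map_sub, aeval_X, Function.comp, hσ]
      rw [← Equiv.prod_comp σ fun k => ∏ l ∈ Finset.univ.erase k, (u k - u l)]
      refine Finset.prod_congr rfl fun k _ => ?_
      refine Finset.prod_nbij σ (fun l hl => ?_) σ.injective.injOn (fun l hl => ?_)
        fun _ _ => rfl
      · simpa using hl
      · refine ⟨σ.symm l, ?_, by simp⟩
        simp only [Finset.coe_erase, Finset.coe_univ, Set.mem_sdiff, Set.mem_univ,
          Set.mem_singleton_iff, true_and] at hl ⊢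
        rintro rfl
        simp at hl
    have h3 : ∏ k, w (f k) = ∏ k, w k := Equiv.prod_comp σ w
    rw [hQ, map_mul, h1, h2, h3, mul_left_comm, ← Finset.prod_mul_distrib]
    congr 1
    refine Finset.prod_congr rfl fun k _ => div_mul_cancel₀ _ ?_
    refine Finset.prod_ne_zero_iff.2 fun l hl => sub_ne_zero.2 (hu.ne ?_)
    exact (Finset.ne_of_mem_erase hl).symm
  have hzero : ∀ f : ι → ι, ¬ Function.Injective f → (∏ k, w (f k)) * aeval (u ∘ f) Q = 0 := by
    intro f hf
    simp only [Function.Injective, not_forall] at hf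
    obtain ⟨a, b, hab, hne⟩ := hf
    have : aeval (u ∘ f) (∏ k, ∏ l ∈ Finset.univ.erase k, (X k - X l) : MvPolynomial ι ℂ) = 0 := by
      simp only [map_prod, map_sub, aeval_X, Function.comp]
      refine Finset.prod_eq_zero (Finset.mem_univ a) ?_
      refine Finset.prod_eq_zero (i := b) (by simp [Ne.symm hne]) (by rw [hab, sub_self])
    rw [hQ, map_mul, this, mul_zero, mul_zero]
  classical
  rw [← Finset.sum_filter_add_sum_filter_not _ (fun f : ι → ι => Function.Injective f),
    Finset.sum_congr rfl fun f hf => hval f (Finset.mem_filter.1 hf).2,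
    Finset.sum_congr (s₁ := Finset.univ.filter fun f : ι → ι => ¬ Function.Injective f) rfl
      fun f hf => hzero f (Finset.mem_filter.1 hf).2,
    Finset.sum_const_zero, add_zero, Finset.sum_const] at hmem
  set N := (Finset.univ.filter fun f : ι → ι => Function.Injective f).card with hN
  have hN0 : (N : ℂ) ≠ 0 := by
    rw [Nat.cast_ne_zero, hN]
    exact Finset.card_ne_zero.2 ⟨id, by simp [Function.injective_id]⟩
  have := A.smul_mem hmem (N : ℂ)⁻¹
  rwa [← Nat.cast_smul_eq_nsmul ℂ, smul_smul, inv_mul_cancel₀ hN0, one_smul] at this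

/-! ### Multiples of the resultant -/

/-- The subalgebra of `ℂ[u, v]` generated by the complete supersymmetric functions. -/
noncomputable def superAlg (p q : ℕ) : Subalgebra ℂ (MvPolynomial (Fin p ⊕ Fin q) ℂ) :=
  Algebra.adjoin ℂ (Set.range fun m : ℕ => PowerSeries.coeff m
    (superSeries (fun i : Fin p => (X (Sum.inl i) : MvPolynomial (Fin p ⊕ Fin q) ℂ))
      (fun j : Fin q => X (Sum.inr j))))

/-- The resultant `∏ᵢ ∏ⱼ (uᵢ - vⱼ)`. -/
noncomputable def resultantPoly (p q : ℕ) : MvPolynomial (Fin p ⊕ Fin q) ℂ :=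
  ∏ i, ∏ j, (X (Sum.inl i) - X (Sum.inr j))

lemma rename_inl_mul_resultant_mem (p q : ℕ) (F : MvPolynomial (Fin p) ℂ) (hF : F.IsSymmetric) :
    rename Sum.inl F * resultantPoly p q ∈ superAlg p q := by
  set S := MvPolynomial (Fin p ⊕ Fin q) ℂ
  set φ : S →ₐ[ℂ] FractionRing S := IsScalarTower.toAlgHom ℂ S (FractionRing S) with hφ
  have hφi : Function.Injective φ := IsFractionRing.injective S (FractionRing S)
  have key := aeval_mul_resultant_mem (fun i : Fin p => φ (X (Sum.inl i)))
    (fun a b hab => Sum.inl_injective (X_injective (hφi hab)))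
    (fun j : Fin q => φ (X (Sum.inr j))) ((superAlg p q).map φ)
    (fun m => ?_) F hF
  · obtain ⟨a, ha, hae⟩ := key
    have : a = rename Sum.inl F * resultantPoly p q := by
      apply hφi
      refine hae.trans ?_
      have hren : (aeval fun i : Fin p => φ (X (Sum.inl i))) = φ.comp (rename Sum.inl) := by
        ext i
        rw [aeval_X, AlgHom.comp_apply, rename_X]
      rw [map_mul, resultantPoly, hren]
      simp only [map_prod, map_sub]
      rfl
    exact this ▸ ha
  · exact ⟨_, Algebra.subset_adjoin ⟨m, rfl⟩, map_coeff_superSeries φ.toRingHom _ _ m⟩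

lemma esymm_eq_coeff (q k : ℕ) :
    esymm (Fin q) ℂ k = (-1) ^ k * PowerSeries.coeff k (∏ j : Fin q,
      (1 - PowerSeries.C (X j : MvPolynomial (Fin q) ℂ) * PowerSeries.X)) := by
  have h1 : ∏ j : Fin q, (1 - PowerSeries.C (X j : MvPolynomial (Fin q) ℂ) * PowerSeries.X) =
      ∑ t ∈ (Finset.univ : Finset (Fin q)).powerset,
        PowerSeries.C ((-1) ^ t.card * ∏ j ∈ t, X j) * PowerSeries.X ^ t.card := by
    simp only [sub_eq_add_neg]
    rw [Finset.prod_one_add]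
    refine Finset.sum_congr rfl fun t _ => ?_
    simp only [← neg_mul, ← map_neg]
    rw [Finset.prod_mul_distrib, Finset.prod_const, ← map_prod, Finset.prod_neg]
  rw [h1, map_sum, Finset.mul_sum, esymm, Finset.powersetCard_eq_filter, Finset.sum_filter]
  refine Finset.sum_congr rfl fun t _ => ?_
  rw [PowerSeries.coeff_C_mul, PowerSeries.coeff_X_pow]
  by_cases ht : t.card = k
  · subst ht
    rw [if_pos rfl, if_pos rfl, mul_one, ← mul_assoc, ← mul_pow]
    simp
  · rw [if_neg ht, if_neg (Ne.symm ht)]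
    simp

/-- The coefficients of `V = ∏ⱼ (1 - vⱼ z)` generate the symmetric polynomials in `v`, and
`V = U H` with `U = ∏ᵢ (1 - uᵢ z)` and `H = superSeries u v` expresses them through symmetric
polynomials in `u` and complete supersymmetric functions. -/
lemma rename_mul_rename_mul_resultant_mem (p q : ℕ) (G : MvPolynomial (Fin q) ℂ)
    (hG : G.IsSymmetric) (F : MvPolynomial (Fin p) ℂ) (hF : F.IsSymmetric) :
    rename Sum.inr G * (rename Sum.inl F * resultantPoly p q) ∈ superAlg p q := by
  -- The set `M` of multipliers is stable under multiplication by symmetric polynomials in `v`.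
  set M : Set (MvPolynomial (Fin p ⊕ Fin q) ℂ) := {x | ∀ F : MvPolynomial (Fin p) ℂ,
    F.IsSymmetric → x * (rename Sum.inl F * resultantPoly p q) ∈ superAlg p q} with hM
  have hc : ∀ k, ∀ x ∈ M, rename Sum.inr (PowerSeries.coeff k (∏ j : Fin q,
      (1 - PowerSeries.C (X j : MvPolynomial (Fin q) ℂ) * PowerSeries.X))) * x ∈ M := by
    intro k x hx F hF
    set Uu : PowerSeries (MvPolynomial (Fin p) ℂ) := ∏ i : Fin p,
      (1 - PowerSeries.C (X i) * PowerSeries.X) with hUu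
    have hsymm : ∀ a, (PowerSeries.coeff a Uu).IsSymmetric := by
      intro a σ
      have : PowerSeries.map (rename σ).toRingHom Uu = Uu := by
        simp only [hUu, map_prod, map_sub, map_one, map_mul, PowerSeries.map_C, PowerSeries.map_X,
          AlgHom.toRingHom_eq_coe, RingHom.coe_coe, rename_X]
        exact Equiv.prod_comp σ fun i =>
          (1 - PowerSeries.C (X i : MvPolynomial (Fin p) ℂ) * PowerSeries.X)
      conv_rhs => rw [← this]
      rw [PowerSeries.coeff_map]
      rfl
    have hrel : PowerSeries.map (rename (Sum.inr : Fin q → Fin p ⊕ Fin q)).toRingHom (∏ j : Fin q,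
        (1 - PowerSeries.C (X j : MvPolynomial (Fin q) ℂ) * PowerSeries.X)) =
        PowerSeries.map (rename (Sum.inl : Fin p → Fin p ⊕ Fin q)).toRingHom Uu *
        superSeries (fun i : Fin p => (X (Sum.inl i) : MvPolynomial (Fin p ⊕ Fin q) ℂ))
          (fun j : Fin q => X (Sum.inr j)) := by
      simp only [hUu, superSeries, map_prod, map_sub, map_one, map_mul, PowerSeries.map_C,
        PowerSeries.map_X, AlgHom.toRingHom_eq_coe, RingHom.coe_coe, rename_X]
      rw [mul_left_comm, ← Finset.prod_mul_distrib]
      simp [one_sub_mul_geom]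
    have hk := congrArg (PowerSeries.coeff k) hrel
    rw [PowerSeries.coeff_map, PowerSeries.coeff_mul] at hk
    simp only [PowerSeries.coeff_map, AlgHom.toRingHom_eq_coe, RingHom.coe_coe] at hk
    rw [hk, Finset.sum_mul, Finset.sum_mul]
    refine Subalgebra.sum_mem _ fun ab _ => ?_
    have h1 := hx (PowerSeries.coeff ab.1 Uu * F) ((hsymm _).mul hF)
    have h2 : PowerSeries.coeff ab.2 (superSeries
      (fun i : Fin p => (X (Sum.inl i) : MvPolynomial (Fin p ⊕ Fin q) ℂ))
          (fun j : Fin q => X (Sum.inr j))) ∈ superAlg p q := Algebra.subset_adjoin ⟨_, rfl⟩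
    convert (superAlg p q).mul_mem h2 h1 using 1
    rw [map_mul]
    ring
  obtain ⟨P, hP⟩ := esymmAlgHom_surjective (σ := Fin q) ℂ (n := q) (by simp) ⟨G, hG⟩
  have hP' : G = aeval (fun i : Fin q => esymm (Fin q) ℂ (i + 1)) P := by
    rw [← esymmAlgHom_apply, hP]
  have hall : ∀ P : MvPolynomial (Fin q) ℂ, ∀ x ∈ M,
      rename Sum.inr (aeval (fun i : Fin q => esymm (Fin q) ℂ (i + 1)) P) * x ∈ M := by
    intro P
    induction P using MvPolynomial.induction_on with
    | C c =>
      intro x hx F hF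
      rw [aeval_C, MvPolynomial.algebraMap_eq, rename_C, mul_assoc, ← smul_eq_C_mul]
      exact Subalgebra.smul_mem _ (hx F hF) c
    | add P Q hP hQ =>
      intro x hx F hF
      rw [map_add, map_add, add_mul, add_mul]
      exact Subalgebra.add_mem _ (hP x hx F hF) (hQ x hx F hF)
    | mul_X P i hP =>
      intro x hx F hF
      have := (hP _ (hc (i + 1) x hx)) (C ((-1) ^ (i.val + 1)) * F) ((IsSymmetric.C _).mul hF)
      convert this using 1
      simp only [map_mul, aeval_X, esymm_eq_coeff, map_pow, map_neg, map_one]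
      ring
  rw [hP']
  have h1 : (1 : MvPolynomial (Fin p ⊕ Fin q) ℂ) ∈ M := fun F hF => by
    rw [one_mul]; exact rename_inl_mul_resultant_mem p q F hF
  simpa using hall P 1 h1 F hF

lemma isSymmetric_sum_perm {p : ℕ} (F : MvPolynomial (Fin p) ℂ) :
    (∑ σ : Equiv.Perm (Fin p), rename σ F).IsSymmetric := by
  intro τ
  rw [map_sum]
  simp only [rename_rename]
  exact Equiv.sum_comp (Equiv.mulLeft τ) fun σ : Equiv.Perm (Fin p) => rename σ F

/-- Every multiple of the resultant by a doubly symmetric polynomial lies in `superAlg`. By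
averaging over both symmetric groups it is enough to treat products of a symmetric polynomial in
`u` and one in `v`. -/
lemma mul_resultant_mem (p q : ℕ) (h : MvPolynomial (Fin p ⊕ Fin q) ℂ)
    (hh : ∀ (σ : Equiv.Perm (Fin p)) (τ : Equiv.Perm (Fin q)), rename (Sum.map σ τ) h = h) :
    h * resultantPoly p q ∈ superAlg p q := by
  have key : ∀ h : MvPolynomial (Fin p ⊕ Fin q) ℂ,
      (∑ σ : Equiv.Perm (Fin p), ∑ τ : Equiv.Perm (Fin q), rename (Sum.map σ τ) h) *
        resultantPoly p q ∈ superAlg p q := by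
    intro h
    induction h using MvPolynomial.induction_on' with
    | add P Q hP hQ =>
      simp only [map_add, Finset.sum_add_distrib, add_mul]
      exact Subalgebra.add_mem _ hP hQ
    | monomial a c =>
      set m₁ : MvPolynomial (Fin p) ℂ := C c * ∏ i, X i ^ a (Sum.inl i)
      set m₂ : MvPolynomial (Fin q) ℂ := ∏ j, X j ^ a (Sum.inr j)
      have hsplit : (monomial a c : MvPolynomial (Fin p ⊕ Fin q) ℂ) =
          rename Sum.inl m₁ * rename Sum.inr m₂ := by
        rw [monomial_eq, Finsupp.prod_fintype _ _ (by simp), Fintype.prod_sum_type]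
        simp [m₁, m₂, map_prod, mul_assoc]
      have hsum : (∑ σ : Equiv.Perm (Fin p), ∑ τ : Equiv.Perm (Fin q),
          rename (Sum.map σ τ) (monomial a c : MvPolynomial (Fin p ⊕ Fin q) ℂ)) =
          rename Sum.inr (∑ τ : Equiv.Perm (Fin q), rename τ m₂) *
          rename Sum.inl (∑ σ : Equiv.Perm (Fin p), rename σ m₁) := by
        rw [map_sum, map_sum, mul_comm, Finset.sum_mul_sum]
        refine Finset.sum_congr rfl fun σ _ => Finset.sum_congr rfl fun τ _ => ?_
        rw [hsplit, map_mul]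
        simp only [rename_rename]
        rfl
      rw [hsum, mul_assoc]
      exact rename_mul_rename_mul_resultant_mem p q _ (isSymmetric_sum_perm m₂) _
        (isSymmetric_sum_perm m₁)
  have := key h
  simp only [hh, Finset.sum_const, smul_smul] at this
  set N := (Finset.univ : Finset (Equiv.Perm (Fin p))).card *
    (Finset.univ : Finset (Equiv.Perm (Fin q))).card with hN
  have hN0 : (N : ℂ) ≠ 0 := by
    rw [Nat.cast_ne_zero, hN]
    simp
  have h2 := Subalgebra.smul_mem _ this (N : ℂ)⁻¹
  rwa [← Nat.cast_smul_eq_nsmul ℂ, smul_mul_assoc, smul_smul, inv_mul_cancel₀ hN0, one_smul] at h2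

/-! ### Division by the resultant -/

/-- Setting `uᵢ` equal to `vⱼ`. -/
noncomputable def identify {p q : ℕ} (i : Fin p) (j : Fin q) :
    MvPolynomial (Fin p ⊕ Fin q) ℂ →ₐ[ℂ] MvPolynomial (Fin p ⊕ Fin q) ℂ :=
  aeval (Function.update X (Sum.inl i) (X (Sum.inr j)))

lemma dvd_of_identify_eq_zero {p q : ℕ} (i : Fin p) (j : Fin q)
    (k : MvPolynomial (Fin p ⊕ Fin q) ℂ) (hk : identify i j k = 0) :
    X (Sum.inl i) - X (Sum.inr j) ∣ k := by
  rw [← Ideal.mem_span_singleton, ← Ideal.Quotient.eq_zero_iff_mem]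
  set I := Ideal.span {(X (Sum.inl i) - X (Sum.inr j) : MvPolynomial (Fin p ⊕ Fin q) ℂ)}
  have : (Ideal.Quotient.mkₐ ℂ I).comp (identify i j) = Ideal.Quotient.mkₐ ℂ I := by
    ext v
    simp only [identify, AlgHom.comp_apply, aeval_X]
    by_cases hv : v = Sum.inl i
    · subst hv
      simp only [Function.update_self]
      refine ((Ideal.Quotient.eq).2 ?_).symm
      exact Ideal.mem_span_singleton_self _
    · rw [Function.update_of_ne hv]
  have h2 := DFunLike.congr_fun this k
  rw [AlgHom.comp_apply, hk, map_zero] at h2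
  exact h2.symm

lemma identify_ne_zero {p q : ℕ} (i a : Fin p) (j b : Fin q) (h : (a, b) ≠ (i, j)) :
    identify i j (X (Sum.inl a) - X (Sum.inr b)) ≠ 0 := by
  rw [identify, map_sub, aeval_X, aeval_X, Function.update_of_ne (by simp : Sum.inr b ≠ Sum.inl i),
    sub_ne_zero]
  by_cases ha : a = i
  · subst ha
    rw [Function.update_self]
    intro hX
    exact h (by rw [Sum.inr_injective (X_injective hX)])
  · rw [Function.update_of_ne (by simpa using ha)]
    intro hX
    simpa using X_injective hX

lemma resultant_dvd {p q : ℕ} (k : MvPolynomial (Fin p ⊕ Fin q) ℂ)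
    (hk : ∀ i j, identify i j k = 0) : resultantPoly p q ∣ k := by
  have key : ∀ s : Finset (Fin p × Fin q),
      ∏ ij ∈ s, (X (Sum.inl ij.1) - X (Sum.inr ij.2) : MvPolynomial (Fin p ⊕ Fin q) ℂ) ∣ k := by
    intro s
    induction s using Finset.induction_on with
    | empty => simp
    | insert ij s hij ih =>
      obtain ⟨l, rfl⟩ := ih
      have h0 := hk ij.1 ij.2
      rw [map_mul, map_prod, mul_eq_zero, Finset.prod_eq_zero_iff] at h0
      rcases h0 with ⟨ab, hab, h0⟩ | h0
      · exact absurd h0 (identify_ne_zero _ _ _ _ fun h => hij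
          (by rwa [show ij = ab from h.symm]))
      · rw [Finset.prod_insert hij, mul_comm]
        exact mul_dvd_mul_left _ (dvd_of_identify_eq_zero _ _ _ h0)
  have := key Finset.univ
  rwa [← Finset.univ_product_univ, Finset.prod_product] at this

lemma resultantPoly_ne_zero (p q : ℕ) : resultantPoly p q ≠ 0 := by
  refine Finset.prod_ne_zero_iff.2 fun i _ => Finset.prod_ne_zero_iff.2 fun j _ => ?_
  rw [sub_ne_zero]
  intro h
  simpa using X_injective h

lemma rename_resultantPoly (p q : ℕ) (σ : Equiv.Perm (Fin p)) (τ : Equiv.Perm (Fin q)) :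
    rename (Sum.map σ τ) (resultantPoly p q) = resultantPoly p q := by
  simp only [resultantPoly, map_prod, map_sub, rename_X, Sum.map_inl, Sum.map_inr]
  rw [Equiv.prod_comp σ fun i => ∏ j, (X (Sum.inl i) - X (Sum.inr (τ j)) :
    MvPolynomial (Fin p ⊕ Fin q) ℂ)]
  exact Finset.prod_congr rfl fun i _ => Equiv.prod_comp τ fun j =>
    (X (Sum.inl i) - X (Sum.inr j) : MvPolynomial (Fin p ⊕ Fin q) ℂ)

/-- A doubly symmetric polynomial vanishing on all hyperplanes `uᵢ = vⱼ` lies in `superAlg`. -/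
lemma mem_superAlg_of_vanish (p q : ℕ) (k : MvPolynomial (Fin p ⊕ Fin q) ℂ)
    (hs : ∀ (σ : Equiv.Perm (Fin p)) (τ : Equiv.Perm (Fin q)), rename (Sum.map σ τ) k = k)
    (hk : ∀ i j (w : Fin p ⊕ Fin q → ℂ), w (Sum.inl i) = w (Sum.inr j) → eval w k = 0) :
    k ∈ superAlg p q := by
  obtain ⟨h, rfl⟩ := resultant_dvd k fun i j => MvPolynomial.funext fun w => by
    rw [map_zero, identify, ← coe_aeval_eq_eval, RingHom.coe_coe, comp_aeval_apply]
    refine hk i j _ ?_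
    simp
  rw [mul_comm]
  refine mul_resultant_mem p q h fun σ τ => ?_
  have := hs σ τ
  rw [map_mul, rename_resultantPoly] at this
  exact mul_left_cancel₀ (resultantPoly_ne_zero p q) this

/-! ### Supersymmetric polynomials are generated by the complete supersymmetric functions -/

/-- Doubly symmetric polynomials in `(u | v)` which do not change when two equal values
`uᵢ = vⱼ` are both replaced by `t`. All pairs `(i, j)` are allowed, so that the notion makes
sense (with an empty cancellation condition) when one of the groups is empty. -/
def IsCancelSym (p q : ℕ) (h : MvPolynomial (Fin p ⊕ Fin q) ℂ) : Prop :=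
  (∀ (σ : Equiv.Perm (Fin p)) (τ : Equiv.Perm (Fin q)), rename (Sum.map σ τ) h = h) ∧
  ∀ i j (w : Fin p ⊕ Fin q → ℂ) (t : ℂ), w (Sum.inl i) = w (Sum.inr j) →
    eval (Function.update (Function.update w (Sum.inl i) t) (Sum.inr j) t) h = eval w h

lemma isCancelSym_coeff (p q m : ℕ) : IsCancelSym p q (PowerSeries.coeff m
    (superSeries (fun i : Fin p => (X (Sum.inl i) : MvPolynomial (Fin p ⊕ Fin q) ℂ))
      (fun j : Fin q => X (Sum.inr j)))) := by
  refine ⟨fun σ τ => ?_, fun i j w t hw => ?_⟩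
  · rw [algHom_coeff_superSeries]
    simp only [rename_X, Sum.map_inl, Sum.map_inr]
    rw [← superSeries_perm (fun i : Fin p => (X (Sum.inl i) : MvPolynomial (Fin p ⊕ Fin q) ℂ))
      (fun j : Fin q => X (Sum.inr j)) σ τ]
    rfl
  · rw [map_coeff_superSeries, map_coeff_superSeries]
    refine congrArg _ (superSeries_congr _ _ _ _ i j ?_ ?_ (fun a ha => ?_) (fun b hb => ?_))
    · simp
    · simpa using hw
    · simp [ha]
    · simp [hb]

lemma isCancelSym_of_mem {p q : ℕ} {h : MvPolynomial (Fin p ⊕ Fin q) ℂ}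
    (hh : h ∈ superAlg p q) : IsCancelSym p q h := by
  induction hh using Algebra.adjoin_induction with
  | mem x hx =>
    obtain ⟨m, rfl⟩ := hx
    exact isCancelSym_coeff p q m
  | algebraMap r =>
    refine ⟨fun σ τ => AlgHom.commutes _ r, fun i j w t hw => ?_⟩
    rw [MvPolynomial.algebraMap_eq, eval_C, eval_C]
  | add x y _ _ hx hy =>
    refine ⟨fun σ τ => ?_, fun i j w t hw => ?_⟩
    · rw [map_add, hx.1, hy.1]
    · rw [map_add, map_add, hx.2 i j w t hw, hy.2 i j w t hw]
  | mul x y _ _ hx hy =>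
    refine ⟨fun σ τ => ?_, fun i j w t hw => ?_⟩
    · rw [map_mul, hx.1, hy.1]
    · rw [map_mul, map_mul, hx.2 i j w t hw, hy.2 i j w t hw]

lemma IsCancelSym.sub {p q : ℕ} {x y : MvPolynomial (Fin p ⊕ Fin q) ℂ}
    (hx : IsCancelSym p q x) (hy : IsCancelSym p q y) : IsCancelSym p q (x - y) := by
  refine ⟨fun σ τ => ?_, fun i j w t hw => ?_⟩
  · rw [map_sub, hx.1, hy.1]
  · rw [map_sub, map_sub, hx.2 i j w t hw, hy.2 i j w t hw]

/-- Adjoining the value `0` at the front of both groups of coordinates. -/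
def consZero {R : Type*} [Zero R] {p q : ℕ} (w : Fin p ⊕ Fin q → R) :
    Fin (p + 1) ⊕ Fin (q + 1) → R :=
  Sum.elim (Fin.cons 0 (w ∘ Sum.inl)) (Fin.cons 0 (w ∘ Sum.inr))

lemma consZero_update_inl {R : Type*} [Zero R] {p q : ℕ} (w : Fin p ⊕ Fin q → R) (i : Fin p)
    (t : R) : consZero (Function.update w (Sum.inl i) t) =
      Function.update (consZero w) (Sum.inl i.succ) t := by
  unfold consZero
  rw [Sum.update_elim_inl, ← Fin.cons_update, Sum.update_inl_comp_inl, Sum.update_inl_comp_inr]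

lemma consZero_update_inr {R : Type*} [Zero R] {p q : ℕ} (w : Fin p ⊕ Fin q → R) (j : Fin q)
    (t : R) : consZero (Function.update w (Sum.inr j) t) =
      Function.update (consZero w) (Sum.inr j.succ) t := by
  unfold consZero
  rw [Sum.update_elim_inr, ← Fin.cons_update, Sum.update_inr_comp_inl, Sum.update_inr_comp_inr]

/-- Setting the first variable of each group to zero. -/
noncomputable def dropFirst (p q : ℕ) :
    MvPolynomial (Fin (p + 1) ⊕ Fin (q + 1)) ℂ →ₐ[ℂ] MvPolynomial (Fin p ⊕ Fin q) ℂ :=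
  aeval (consZero X)

lemma eval_dropFirst {p q : ℕ} (w : Fin p ⊕ Fin q → ℂ)
    (h : MvPolynomial (Fin (p + 1) ⊕ Fin (q + 1)) ℂ) :
    eval w (dropFirst p q h) = eval (consZero w) h := by
  rw [dropFirst, ← coe_aeval_eq_eval, RingHom.coe_coe, comp_aeval_apply, ← coe_aeval_eq_eval,
    RingHom.coe_coe]
  congr 2
  funext v
  rcases v with i | j
  · refine Fin.cases ?_ (fun i => ?_) i <;> simp [consZero]
  · refine Fin.cases ?_ (fun i => ?_) j <;> simp [consZero]

lemma IsCancelSym.dropFirst {p q : ℕ} {h : MvPolynomial (Fin (p + 1) ⊕ Fin (q + 1)) ℂ}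
    (hh : IsCancelSym (p + 1) (q + 1) h) : IsCancelSym p q (dropFirst p q h) := by
  refine ⟨fun σ τ => ?_, fun i j w t hw => ?_⟩
  · refine MvPolynomial.funext fun w => ?_
    rw [eval_rename, eval_dropFirst, eval_dropFirst]
    conv_rhs => rw [← hh.1 (Equiv.Perm.decomposeFin.symm (0, σ)) (Equiv.Perm.decomposeFin.symm (0, τ))]
    rw [eval_rename]
    congr 2
    funext v
    rcases v with i | j
    · refine Fin.cases ?_ (fun i => ?_) i <;> simp [consZero]
    · refine Fin.cases ?_ (fun i => ?_) j <;> simp [consZero]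
  · rw [eval_dropFirst, eval_dropFirst, ← hh.2 i.succ j.succ (consZero w) t (by simpa [consZero])]
    rw [consZero_update_inr, consZero_update_inl]

/-- `dropFirst` maps `superAlg` onto `superAlg`. -/
lemma exists_dropFirst_eq {p q : ℕ} {h : MvPolynomial (Fin p ⊕ Fin q) ℂ}
    (hh : h ∈ superAlg p q) : ∃ a ∈ superAlg (p + 1) (q + 1), dropFirst p q a = h := by
  suffices superAlg p q ≤ (superAlg (p + 1) (q + 1)).map (dropFirst p q) from this hh
  refine Algebra.adjoin_le ?_
  rintro _ ⟨m, rfl⟩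
  refine ⟨_, Algebra.subset_adjoin ⟨m, rfl⟩, ?_⟩
  refine (map_coeff_superSeries (dropFirst p q).toRingHom _ _ m).trans ?_
  have h0 : ∀ v, (dropFirst p q) (X v) = consZero X v := fun v => aeval_X _ _
  rw [superSeries_cancel _ _ (0 : Fin (p + 1)) (0 : Fin (q + 1)) (by simp [h0, consZero])]
  congr 1
  simp [superSeries, h0, consZero, ← Finset.filter_ne', Fin.prod_univ_succ, Finset.prod_filter,
    Fin.succ_ne_zero]

/-- A polynomial with the cancellation property that `dropFirst` annihilates vanishes on every
hyperplane `uᵢ = vⱼ`: symmetry moves the pair to the front, cancellation sets it to zero. -/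
lemma IsCancelSym.eval_eq_zero {p q : ℕ} {k : MvPolynomial (Fin (p + 1) ⊕ Fin (q + 1)) ℂ}
    (hk : IsCancelSym (p + 1) (q + 1) k) (h0 : _root_.dropFirst p q k = 0) (i : Fin (p + 1))
    (j : Fin (q + 1)) (w : Fin (p + 1) ⊕ Fin (q + 1) → ℂ) (hw : w (Sum.inl i) = w (Sum.inr j)) :
    eval w k = 0 := by
  rw [← hk.1 (Equiv.swap 0 i) (Equiv.swap 0 j), eval_rename,
    ← hk.2 0 0 (w ∘ Sum.map (Equiv.swap 0 i) (Equiv.swap 0 j)) 0 (by simpa using hw)]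
  set w' := w ∘ Sum.map (Equiv.swap 0 i) (Equiv.swap 0 j)
  have : Function.update (Function.update w' (Sum.inl 0) 0) (Sum.inr 0) 0 =
      consZero (Sum.elim (fun a : Fin p => w' (Sum.inl a.succ))
        fun b : Fin q => w' (Sum.inr b.succ)) := by
    funext v
    rcases v with a | b
    · refine Fin.cases ?_ (fun a => ?_) a <;> simp [consZero]
    · refine Fin.cases ?_ (fun a => ?_) b <;> simp [consZero]
  rw [this, ← eval_dropFirst, h0, map_zero]

/-- The complete supersymmetric functions generate all supersymmetric polynomials. -/
lemma mem_superAlg (p : ℕ) : ∀ (q : ℕ) (h : MvPolynomial (Fin p ⊕ Fin q) ℂ),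
    IsCancelSym p q h → h ∈ superAlg p q := by
  induction p with
  | zero => exact fun q h hh => mem_superAlg_of_vanish 0 q h hh.1 fun i => i.elim0
  | succ p ih =>
    intro q
    cases q with
    | zero => exact fun h hh => mem_superAlg_of_vanish _ 0 h hh.1 fun _ j => j.elim0
    | succ q =>
      intro h hh
      obtain ⟨a, ha, hae⟩ := exists_dropFirst_eq (ih q _ hh.dropFirst)
      have hk := hh.sub (isCancelSym_of_mem ha)
      have := mem_superAlg_of_vanish _ _ (h - a) hk.1
        (hk.eval_eq_zero (by rw [map_sub, hae, sub_self]))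
      simpa using Subalgebra.add_mem _ this ha

/-! ### Even polynomials and the restriction map -/

lemma coeff_aeval_C_mul_X {σ : Type} (g : MvPolynomial σ ℂ) (ε : σ → ℂ) (m : σ →₀ ℕ) :
    coeff m (aeval (fun v => C (ε v) * X v) g) = (m.prod fun v n => ε v ^ n) * coeff m g := by
  classical
  induction g using MvPolynomial.induction_on' with
  | add P Q hP hQ => rw [map_add, coeff_add, coeff_add, hP, hQ, mul_add]
  | monomial a c =>
    have : aeval (fun v => C (ε v) * X v) (monomial a c : MvPolynomial σ ℂ) =
        C (a.prod fun v n => ε v ^ n) * monomial a c := by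
      rw [aeval_monomial, monomial_eq]
      simp only [mul_pow, MvPolynomial.algebraMap_eq, Finsupp.prod, map_prod, map_pow,
        Finset.prod_mul_distrib]
      ring
    rw [this, coeff_C_mul, coeff_monomial]
    split_ifs with h
    · rw [h]
    · rw [mul_zero, mul_zero]

/-- A polynomial invariant under all sign changes is a polynomial in the squares. -/
lemma exists_expand_eq {σ : Type} [Finite σ] (g : MvPolynomial σ ℂ)
    (hg : ∀ ε : σ → ℂ, (∀ v, ε v = 1 ∨ ε v = -1) → aeval (fun v => C (ε v) * X v) g = g) :
    ∃ h, expand 2 h = g := by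
  classical
  have heven : ∀ m ∈ g.support, ∀ v : σ, Even (m v) := by
    intro m hm v
    by_contra hodd
    rw [Nat.not_even_iff_odd] at hodd
    set ε : σ → ℂ := Function.update 1 v (-1) with hε
    have h1 := coeff_aeval_C_mul_X g ε m
    have hprod : (m.prod fun v n => ε v ^ n) = -1 := by
      have := Fintype.ofFinite σ
      rw [Finsupp.prod_fintype _ _ (by simp), Finset.prod_eq_single v]
      · simp [hε, hodd.neg_one_pow]
      · intro b _ hb
        simp [hε, hb]
      · simp
    rw [hg ε fun b => ?_, hprod] at h1
    · exact mem_support_iff.1 hm (by linear_combination h1 / 2)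
    · by_cases hb : b = v
      · subst hb; simp [hε]
      · simp [hε, hb]
  refine ⟨∑ m ∈ g.support, monomial (m.mapRange (· / 2) rfl) (coeff m g), ?_⟩
  conv_rhs => rw [g.as_sum]
  rw [map_sum]
  refine Finset.sum_congr rfl fun m hm => ?_
  have hm2 : 2 • m.mapRange (· / 2) rfl = m := by
    ext v
    have := Nat.two_mul_div_two_of_even (heven m hm v)
    simpa using this
  rw [expand_monomial, hm2]

/-- If `h(x², y²)` is supersymmetric, then `h` has the cancellation property: choose square roots
of the parameters, with opposite signs on the cancelling pair. -/
lemma isCancelSym_of_expand {p q : ℕ} (a₀ : Fin p) (b₀ : Fin q)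
    (h : MvPolynomial (Fin p ⊕ Fin q) ℂ) (hg : IsSuperSymOn a₀ b₀ (expand 2 h)) :
    IsCancelSym p q h := by
  have hsym : ∀ (σ : Equiv.Perm (Fin p)) (τ : Equiv.Perm (Fin q)),
      rename (Sum.map σ τ) h = h := by
    intro σ τ
    apply expand_injective (n := 2) two_pos
    have : Sum.map σ τ = Sum.map σ id ∘ Sum.map id τ := by
      rw [Sum.map_comp_map]; rfl
    rw [← rename_expand, this, ← rename_rename, hg.2.1 τ, hg.1 σ]
  have hbase : ∀ (w : Fin p ⊕ Fin q → ℂ) (t : ℂ), w (Sum.inr b₀) = - w (Sum.inl a₀) →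
      eval (Function.update (Function.update w (Sum.inl a₀) t) (Sum.inr b₀) (-t)) (expand 2 h) =
        eval w (expand 2 h) := by
    intro w t hw
    have hsub : ∀ t, eval w (aeval (substAt a₀ b₀ t) (expand 2 h)) =
        eval (Function.update (Function.update w (Sum.inl a₀) t) (Sum.inr b₀) (-t))
          (expand 2 h) := by
      intro t
      rw [← coe_aeval_eq_eval, RingHom.coe_coe, comp_aeval_apply, ← coe_aeval_eq_eval,
        RingHom.coe_coe]
      congr 2
      funext v
      unfold substAt
      by_cases h1 : v = Sum.inl a₀
      · subst h1
        simp
      · by_cases h2 : v = Sum.inr b₀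
        · subst h2
          simp
        · simp [h1, h2]
    rw [← hsub, hg.2.2 t (w (Sum.inl a₀)), hsub, Function.update_eq_self, ← hw,
      Function.update_eq_self]
  have hbase' : ∀ (w : Fin p ⊕ Fin q → ℂ) (t : ℂ), w (Sum.inl a₀) = w (Sum.inr b₀) →
      eval (Function.update (Function.update w (Sum.inl a₀) t) (Sum.inr b₀) t) h = eval w h := by
    intro w t hw
    choose r hr using fun z : ℂ => IsAlgClosed.exists_pow_nat_eq z two_pos
    have key := hbase (Function.update (fun v => r (w v)) (Sum.inr b₀) (- r (w (Sum.inl a₀))))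
      (r t) (by simp)
    rw [eval_expand, eval_expand] at key
    convert key using 3
    · funext v
      by_cases h1 : v = Sum.inr b₀
      · subst h1
        simp [hr]
      · by_cases h2 : v = Sum.inl a₀
        · subst h2
          simp [hr]
        · simp [h1, h2, hr]
    · funext v
      by_cases h1 : v = Sum.inr b₀
      · subst h1
        simp [hr, hw]
      · simp [h1, hr]
  refine ⟨hsym, fun i j w t hw => ?_⟩
  -- Move the pair `(i, j)` to the distinguished one.
  have hmove : ∀ w, eval w h = eval (w ∘ Sum.map (Equiv.swap a₀ i) (Equiv.swap b₀ j)) h := by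
    intro w
    rw [← eval_rename, hsym]
  rw [hmove w, hmove (Function.update (Function.update w (Sum.inl i) t) (Sum.inr j) t),
    ← hbase' (w ∘ Sum.map (Equiv.swap a₀ i) (Equiv.swap b₀ j)) t (by simpa using hw)]
  congr 2
  funext v
  rcases v with a | b
  · simp [Function.update_apply, Equiv.swap_apply_eq_iff]
  · simp [Function.update_apply, Equiv.swap_apply_eq_iff]

/-- Doubling the parameters with signs turns the generating series in `z` into the one of the
squared parameters in `z²`. -/
lemma superSeries_doubled {R ι κ : Type*} [CommRing R] [Fintype ι] [Fintype κ]
    (u : ι → R) (v : κ → R) :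
    superSeries (Sum.elim u fun i => - u i) (Sum.elim (fun j => - v j) v) =
      PowerSeries.expand 2 two_ne_zero (superSeries (fun i => u i ^ 2) fun j => v j ^ 2) := by
  have h1 : ∀ a : R, (1 - PowerSeries.C (-a) * PowerSeries.X) *
      (1 - PowerSeries.C a * PowerSeries.X) =
      PowerSeries.expand 2 two_ne_zero (1 - PowerSeries.C (a ^ 2) * PowerSeries.X) := by
    intro a
    rw [map_sub, map_mul, map_one, PowerSeries.expand_C, PowerSeries.expand_X, map_neg, map_pow]
    ring
  have h2 : ∀ a : R, PowerSeries.mk (fun n => a ^ n) * PowerSeries.mk (fun n => (-a) ^ n) =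
      PowerSeries.expand 2 two_ne_zero (PowerSeries.mk fun n => (a ^ 2) ^ n) := by
    intro a
    refine left_inv_eq_right_inv (a := (1 - PowerSeries.C (-a) * PowerSeries.X) *
      (1 - PowerSeries.C a * PowerSeries.X)) ?_ ?_
    · linear_combination one_sub_mul_geom (-a) * ((1 - PowerSeries.C a * PowerSeries.X) *
        PowerSeries.mk (fun n => a ^ n)) + one_sub_mul_geom a
    · rw [h1, ← map_mul, one_sub_mul_geom, map_one]
  simp only [superSeries, Fintype.prod_sum_type, Sum.elim_inl, Sum.elim_inr, map_mul, map_prod]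
  rw [← Finset.prod_mul_distrib, ← Finset.prod_mul_distrib]
  simp only [h1, h2]

/-- The coefficients of `∏_b (1 + 2 y_b z) / ∏_a (1 - 2 x_a z)` are supersymmetric. -/
lemma isSuperSymOn_coeff {α β : Type} [Fintype α] [Fintype β] (a₀ : α) (b₀ : β) (m : ℕ) :
    IsSuperSymOn a₀ b₀ (PowerSeries.coeff m
      (superSeries (fun a : α => (C 2 * X (Sum.inl a) : MvPolynomial (α ⊕ β) ℂ))
        fun b : β => -(C 2 * X (Sum.inr b)))) := by
  refine ⟨fun σ => ?_, fun τ => ?_, fun t t' => ?_⟩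
  · rw [algHom_coeff_superSeries]
    simp only [map_mul, map_neg, rename_X, rename_C, Sum.map_inl, Sum.map_inr, id]
    exact congrArg _ (superSeries_perm
      (fun a : α => (C 2 * X (Sum.inl a) : MvPolynomial (α ⊕ β) ℂ))
        (fun b : β => -(C 2 * X (Sum.inr b))) σ 1)
  · rw [algHom_coeff_superSeries]
    simp only [map_mul, map_neg, rename_X, rename_C, Sum.map_inl, Sum.map_inr, id]
    exact congrArg _ (superSeries_perm
      (fun a : α => (C 2 * X (Sum.inl a) : MvPolynomial (α ⊕ β) ℂ))
        (fun b : β => -(C 2 * X (Sum.inr b))) 1 τ)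
  · rw [algHom_coeff_superSeries, algHom_coeff_superSeries]
    simp only [map_mul, map_neg, aeval_X, aeval_C]
    refine congrArg _ (superSeries_congr _ _ _ _ a₀ b₀ ?_ ?_ (fun a ha => ?_) (fun b hb => ?_))
    · simp [substAt]
    · simp [substAt]
    · simp [substAt, ha]
    · simp [substAt, hb]

/-- The generator `h_m(x², y²)` of the even algebra is the restriction of the `2m`-th coefficient
of `∏_b (1 + 2 y_b z) / ∏_a (1 - 2 x_a z)`. -/
lemma resMap_coeff (p q m : ℕ) :
    ResMap p q (PowerSeries.coeff (2 * m) (superSeries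
      (fun a : Fin p ⊕ Fin p =>
        (C 2 * X (Sum.inl a) : MvPolynomial ((Fin p ⊕ Fin p) ⊕ (Fin q ⊕ Fin q)) ℂ))
      fun b : Fin q ⊕ Fin q => -(C 2 * X (Sum.inr b)))) =
    expand 2 (PowerSeries.coeff m
      (superSeries (fun i : Fin p => (X (Sum.inl i) : MvPolynomial (Fin p ⊕ Fin q) ℂ))
        fun j : Fin q => X (Sum.inr j))) := by
  have hC : (C 2 * C (1 / 2) : MvPolynomial (Fin p ⊕ Fin q) ℂ) = 1 := by
    rw [← C_mul]; norm_num
  have hcoeff := congrArg (PowerSeries.coeff (2 * m)) (superSeries_doubled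
    (fun i : Fin p => (X (Sum.inl i) : MvPolynomial (Fin p ⊕ Fin q) ℂ))
    (fun j : Fin q => X (Sum.inr j)))
  rw [PowerSeries.coeff_expand_mul] at hcoeff
  rw [algHom_coeff_superSeries, algHom_coeff_superSeries]
  simp only [expand_X]
  rw [← hcoeff]
  refine congrArg (PowerSeries.coeff (2 * m)) (congrArg₂ superSeries (funext fun a => ?_)
    (funext fun b => ?_))
  · rcases a with i | i
    · simp only [ResMap, map_mul, aeval_X, aeval_C, MvPolynomial.algebraMap_eq, Sum.elim_inl]
      linear_combination X (Sum.inl i) * hC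
    · simp only [ResMap, map_mul, aeval_X, aeval_C, MvPolynomial.algebraMap_eq, Sum.elim_inr]
      linear_combination -X (Sum.inl i) * hC
  · rcases b with j | j
    · simp only [ResMap, map_neg, map_mul, aeval_X, aeval_C, MvPolynomial.algebraMap_eq,
        Sum.elim_inl]
      linear_combination -X (Sum.inr j) * hC
    · simp only [ResMap, map_neg, map_mul, aeval_X, aeval_C, MvPolynomial.algebraMap_eq,
        Sum.elim_inr]
      linear_combination X (Sum.inr j) * hC

/-- The generators of `superAlg p q` lift by `resMap_coeff`, and the polynomials `h` for which
`h(x², y²)` lifts form a subalgebra. -/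
lemma exists_resMap_eq {p q : ℕ} (a₀ : Fin p) (b₀ : Fin q) {h : MvPolynomial (Fin p ⊕ Fin q) ℂ}
    (hh : h ∈ superAlg p q) :
    ∃ f : MvPolynomial ((Fin p ⊕ Fin p) ⊕ (Fin q ⊕ Fin q)) ℂ,
      IsSuperSymOn (Sum.inl a₀) (Sum.inl b₀) f ∧ ResMap p q f = expand 2 h := by
  induction hh using Algebra.adjoin_induction with
  | mem x hx =>
    obtain ⟨m, rfl⟩ := hx
    exact ⟨_, isSuperSymOn_coeff (Sum.inl a₀) (Sum.inl b₀) (2 * m), resMap_coeff p q m⟩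
  | algebraMap r =>
    refine ⟨algebraMap ℂ _ r, ⟨fun σ => AlgHom.commutes _ r, fun τ => AlgHom.commutes _ r,
      fun t t' => ?_⟩, ?_⟩
    · rw [AlgHom.commutes, AlgHom.commutes]
    · rw [AlgHom.commutes, AlgHom.commutes]
  | add x y _ _ hx hy =>
    obtain ⟨f, hf, hfe⟩ := hx
    obtain ⟨f', hf', hfe'⟩ := hy
    refine ⟨f + f', ⟨fun σ => ?_, fun τ => ?_, fun t t' => ?_⟩, ?_⟩
    · rw [map_add, hf.1, hf'.1]
    · rw [map_add, hf.2.1, hf'.2.1]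
    · rw [map_add, map_add, hf.2.2 t t', hf'.2.2 t t']
    · rw [map_add, map_add, hfe, hfe']
  | mul x y _ _ hx hy =>
    obtain ⟨f, hf, hfe⟩ := hx
    obtain ⟨f', hf', hfe'⟩ := hy
    refine ⟨f * f', ⟨fun σ => ?_, fun τ => ?_, fun t t' => ?_⟩, ?_⟩
    · rw [map_mul, hf.1, hf'.1]
    · rw [map_mul, hf.2.1, hf'.2.1]
    · rw [map_mul, map_mul, hf.2.2 t t', hf'.2.2 t t']
    · rw [map_mul, map_mul, hfe, hfe']

/-- `Res` maps the algebra of supersymmetric polynomials in the `2p + 2q` variables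
`x_{±i}, y_{±j}` onto the algebra of even supersymmetric polynomials in `x_i, y_j`. -/
theorem statement4 (p q : ℕ) (hp : 0 < p) (hq : 0 < q)
    (g : MvPolynomial (Fin p ⊕ Fin q) ℂ)
    (hg : IsEvenSuperSymOn (⟨0, hp⟩ : Fin p) (⟨0, hq⟩ : Fin q) g) :
    ∃ f : MvPolynomial ((Fin p ⊕ Fin p) ⊕ (Fin q ⊕ Fin q)) ℂ,
      IsSuperSymOn (Sum.inl (⟨0, hp⟩ : Fin p)) (Sum.inl (⟨0, hq⟩ : Fin q)) f ∧
        ResMap p q f = g := by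
  obtain ⟨h, rfl⟩ := exists_expand_eq g hg.2
  exact exists_resMap_eq _ _ (mem_superAlg p q h (isCancelSym_of_expand _ _ h hg.1))
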